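/- Let $S_4$ be the symmetric group acting on $\{1,2,3,4\}$, with product $(\pi\rho)(i)=\pi(\rho(i))$. A permutation $\sigma\in S_4$ has a descent at $i\in\{1,2,3\}$ if $\sigma(i)>\sigma(i+1)$, and its recoil set $R(\sigma)\subseteq\{1,2,3\}$ is the set of descents of $\sigma^{-1}$. For $I\subseteq\{1,2,3\}$ let $Y_I=\sum_{R(\sigma)=I}\sigma$ in the rational group algebra $\mathbb{Q}[S_4]$. Then $$Y_{\{2\}}\,Y_{\{1\}}=Y_{\emptyset}+Y_{\{2\}}+Y_{\{3\}}+Y_{\{2,3\}}+Y_{\{1,2\}}$$ and $$Y_{\{2\}}\,Y_{\{3\}}=Y_{\emptyset}+Y_{\{2\}}+Y_{\{1\}}+Y_{\{2,3\}}+Y_{\{1,2\}}.$$ -/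

import Mathlib

/-!
The symmetric group on `{1, …, n + 1}` is `Equiv.Perm (Fin (n + 1))`, the letter `k` of the
ordered set `{1, …, n + 1}` being the element `k - 1` of `Fin (n + 1)`.  Descent and recoil
positions are recorded with their usual values `1, …, n`, as natural numbers.  The product of
permutations is composition, `(π * ρ) i = π (ρ i)`.
-/

/-- The descent set of a permutation: the positions `k ∈ {1, …, n}` at which the `k`-th letter
of the word of `σ` is larger than the next one.  The index `i : Fin n` stands for the
position `k = i + 1`, whose letter is `σ i.castSucc`, followed by `σ i.succ`. -/
def descentSet {n : ℕ} (σ : Equiv.Perm (Fin (n + 1))) : Finset ℕ :=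
  (Finset.univ.filter fun i : Fin n => σ i.castSucc > σ i.succ).image fun i : Fin n => (i : ℕ) + 1

/-- The recoil set of a permutation: the descent set of its inverse. -/
def recoilSet {n : ℕ} (σ : Equiv.Perm (Fin (n + 1))) : Finset ℕ :=
  descentSet σ⁻¹

/-- `recoilSum n I` is `Y_I`: the sum, in the rational group algebra of the symmetric group on
`n + 1` letters, of all permutations with recoil set `I`. -/
noncomputable def recoilSum (n : ℕ) (I : Finset ℕ) :
    MonoidAlgebra ℚ (Equiv.Perm (Fin (n + 1))) :=
  ∑ σ ∈ Finset.univ.filter (fun σ : Equiv.Perm (Fin (n + 1)) => recoilSet σ = I),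
    MonoidAlgebra.of ℚ (Equiv.Perm (Fin (n + 1))) σ

/-- `Y I` is `Y_I` in `ℚ[S_4]`. -/
noncomputable abbrev Y (I : Finset ℕ) : MonoidAlgebra ℚ (Equiv.Perm (Fin 4)) :=
  recoilSum 3 I

/-- The coefficient of `g` in `Y_I` is `1` if `g` has recoil set `I`, and `0` otherwise. -/
theorem coeff_recoilSum (n : ℕ) (I : Finset ℕ) (g : Equiv.Perm (Fin (n + 1))) :
    (recoilSum n I).coeff g = if recoilSet g = I then 1 else 0 := by
  simp [recoilSum, MonoidAlgebra.of_apply, Finsupp.single_apply]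

/-- The coefficient of `g` in `Y_I * Y_J` counts the factorizations `g = σ * τ` with
`recoilSet σ = I` and `recoilSet τ = J`. -/
theorem coeff_recoilSum_mul (n : ℕ) (I J : Finset ℕ) (g : Equiv.Perm (Fin (n + 1))) :
    (recoilSum n I * recoilSum n J).coeff g =
      ((Finset.univ.filter fun σ : Equiv.Perm (Fin (n + 1)) =>
        recoilSet σ = I ∧ recoilSet (σ⁻¹ * g) = J).card : ℚ) := by
  rw [recoilSum, Finset.sum_mul]
  simp [MonoidAlgebra.of_apply, coeff_recoilSum,
    Finset.filter_filter]

/-- The numbers of factorizations that give the coefficients of `Y_{2} * Y_{1}`. -/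
theorem card_factorizations_two_one (g : Equiv.Perm (Fin 4)) :
    (Finset.univ.filter fun σ : Equiv.Perm (Fin 4) =>
      recoilSet σ = {2} ∧ recoilSet (σ⁻¹ * g) = {1}).card =
    (if recoilSet g = ∅ then 1 else 0) + (if recoilSet g = {2} then 1 else 0) +
      (if recoilSet g = {3} then 1 else 0) + (if recoilSet g = {2, 3} then 1 else 0) +
      (if recoilSet g = {1, 2} then 1 else 0) := by
  revert g
  decide +kernel

/-- The numbers of factorizations that give the coefficients of `Y_{2} * Y_{3}`. -/
theorem card_factorizations_two_three (g : Equiv.Perm (Fin 4)) :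
    (Finset.univ.filter fun σ : Equiv.Perm (Fin 4) =>
      recoilSet σ = {2} ∧ recoilSet (σ⁻¹ * g) = {3}).card =
    (if recoilSet g = ∅ then 1 else 0) + (if recoilSet g = {2} then 1 else 0) +
      (if recoilSet g = {1} then 1 else 0) + (if recoilSet g = {2, 3} then 1 else 0) +
      (if recoilSet g = {1, 2} then 1 else 0) := by
  revert g
  decide +kernel

theorem statement15 :
    Y {2} * Y {1} = Y ∅ + Y {2} + Y {3} + Y {2, 3} + Y {1, 2} ∧
      Y {2} * Y {3} = Y ∅ + Y {2} + Y {1} + Y {2, 3} + Y {1, 2} := by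
  constructor
  · ext g
    rw [coeff_recoilSum_mul, card_factorizations_two_one]
    simp only [MonoidAlgebra.coeff_add, Finsupp.add_apply, coeff_recoilSum]
    push_cast
    rfl
  · ext g
    rw [coeff_recoilSum_mul, card_factorizations_two_three]
    simp only [MonoidAlgebra.coeff_add, Finsupp.add_apply, coeff_recoilSum]
    push_cast
    rfl
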